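/- For every t ∈ (0,1), ∫₀^∞ 2h e^{−2h²} erfc( h(1−2t)/√(2t(1−t)) ) dh = t, where erfc(x) = (2/√π) ∫_x^∞ e^{−u²} du. -/

import Mathlib

open Real MeasureTheory Set

noncomputable def erfc (x : ℝ) : ℝ := (2 / Real.sqrt π) * ∫ u in Ioi x, Real.exp (-u ^ 2)

lemma aux_int : Integrable (fun u : ℝ => Real.exp (-u ^ 2)) := by
  simpa using integrable_exp_neg_mul_sq (b := 1) one_pos

lemma erfc_eq (x : ℝ) : erfc x = (2 / Real.sqrt π) *
    ((∫ u in Ioi (0:ℝ), Real.exp (-u ^ 2)) - ∫ u in (0:ℝ)..x, Real.exp (-u ^ 2)) := by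
  unfold erfc
  rw [← intervalIntegral.integral_Ioi_sub_Ioi' aux_int.integrableOn aux_int.integrableOn]
  ring

lemma gauss0 : (∫ u in Ioi (0:ℝ), Real.exp (-u ^ 2)) = Real.sqrt π / 2 := by
  simpa using integral_gaussian_Ioi 1

lemma erfc_zero' : erfc 0 = 1 := by
  have : Real.sqrt π ≠ 0 := by positivity
  unfold erfc
  rw [gauss0]
  field_simp

lemma erfc_deriv (x : ℝ) : HasDerivAt erfc (-(2 / Real.sqrt π) * Real.exp (-x ^ 2)) x := by
  have hc : Continuous (fun u : ℝ => Real.exp (-u ^ 2)) := by fun_prop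
  have h := (hc.integral_hasStrictDerivAt 0 x).hasDerivAt
  have h2 := (h.const_sub (∫ u in Ioi (0:ℝ), Real.exp (-u ^ 2))).const_mul (2 / Real.sqrt π)
  rw [show erfc = _ from funext erfc_eq]
  exact h2.congr_deriv (by ring)

lemma erfc_bound (x : ℝ) : ‖erfc x‖ ≤ 2 := by
  have h0 : 0 < Real.sqrt π := by positivity
  have h1 : 0 ≤ ∫ u in Ioi x, Real.exp (-u ^ 2) := integral_nonneg (fun u => by positivity)
  have h2 : (∫ u in Ioi x, Real.exp (-u ^ 2)) ≤ ∫ u : ℝ, Real.exp (-u ^ 2) :=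
    setIntegral_le_integral aux_int (ae_of_all _ fun u => by positivity)
  have h3 : (∫ u : ℝ, Real.exp (-u ^ 2)) = Real.sqrt π := by
    simpa using integral_gaussian 1
  rw [h3] at h2
  unfold erfc
  rw [Real.norm_of_nonneg (by positivity), div_mul_eq_mul_div, div_le_iff₀ h0]
  linarith

lemma main_c (c : ℝ) : (∫ h in Ioi (0:ℝ), 2 * h * Real.exp (-2 * h ^ 2) * erfc (c * h))
    = 1 / 2 - c / Real.sqrt π * (Real.sqrt (π / (2 + c ^ 2)) / 2) := by
  have hcont : Continuous erfc := continuous_iff_continuousAt.2 fun x => (erfc_deriv x).continuousAt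
  have hi1 : Integrable (fun h : ℝ => 2 * h * Real.exp (-2 * h ^ 2) * erfc (c * h)) := by
    refine Integrable.mul_bdd (c := 2) ?_ (by fun_prop) (ae_of_all _ fun x => erfc_bound _)
    have := (integrable_mul_exp_neg_mul_sq (b := 2) two_pos).const_mul 2
    simpa [mul_assoc] using this
  have hp : 0 < 2 + c ^ 2 := by positivity
  have hi2 : Integrable (fun h : ℝ => c / Real.sqrt π * Real.exp (-(2 + c ^ 2) * h ^ 2)) :=
    (integrable_exp_neg_mul_sq hp).const_mul _
  have hd : ∀ x ∈ Ici (0:ℝ), HasDerivAt (fun h : ℝ => -(1/2) * Real.exp (-2 * h ^ 2) * erfc (c * h))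
      (2 * x * Real.exp (-2 * x ^ 2) * erfc (c * x)
        + c / Real.sqrt π * Real.exp (-(2 + c ^ 2) * x ^ 2)) x := by
    intro x _
    have e1 : HasDerivAt (fun h : ℝ => c * h) c x := by simpa using (hasDerivAt_id x).const_mul c
    have e2 : HasDerivAt (fun h : ℝ => erfc (c * h)) _ x := (erfc_deriv (c * x)).comp x e1
    have e3 : HasDerivAt (fun h : ℝ => Real.exp (-2 * h ^ 2)) _ x :=
      ((hasDerivAt_pow 2 x).const_mul (-2)).exp
    refine ((e3.const_mul (-(1/2))).mul e2).congr_deriv ?_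
    rw [show -(2 + c ^ 2) * x ^ 2 = -2 * x ^ 2 + -(c * x) ^ 2 by ring, Real.exp_add]
    push_cast
    ring
  have ht : Filter.Tendsto (fun h : ℝ => -(1/2) * Real.exp (-2 * h ^ 2) * erfc (c * h))
      Filter.atTop (nhds 0) := by
    have h1 : Filter.Tendsto (fun h : ℝ => Real.exp (-2 * h ^ 2)) Filter.atTop (nhds 0) := by
      refine Real.tendsto_exp_atBot.comp ?_
      exact (Filter.tendsto_pow_atTop two_ne_zero).const_mul_atTop_of_neg (by norm_num)
    refine squeeze_zero_norm (a := fun h : ℝ => Real.exp (-2 * h ^ 2)) (fun h => ?_) h1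
    rw [norm_mul, norm_mul, Real.norm_of_nonneg (Real.exp_pos _).le]
    have := erfc_bound (c * h)
    have h3 := Real.exp_pos (-2 * h ^ 2)
    rw [show ‖(-(1/2):ℝ)‖ = 1/2 by norm_num]
    nlinarith
  have := integral_Ioi_of_hasDerivAt_of_tendsto' hd (hi1.add hi2).integrableOn ht
  rw [integral_add hi1.integrableOn hi2.integrableOn, integral_const_mul,
    integral_gaussian_Ioi] at this
  simp only [mul_zero, erfc_zero'] at this
  norm_num at this ⊢
  linarith

theorem stmt_12 (t : ℝ) (ht : t ∈ Ioo (0:ℝ) 1) :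
    (∫ h in Ioi (0:ℝ),
        2 * h * Real.exp (-2 * h ^ 2) *
          erfc (h * (1 - 2 * t) / Real.sqrt (2 * t * (1 - t)))) = t := by
  obtain ⟨h0, h1⟩ := ht
  have hp : 0 < 2 * t * (1 - t) := by
    have : 0 < 1 - t := by linarith
    positivity
  have hs := Real.sqrt_pos.2 hp
  have hq := Real.sq_sqrt hp.le
  have := main_c ((1 - 2 * t) / Real.sqrt (2 * t * (1 - t)))
  simp only [show ∀ h : ℝ, h * (1 - 2 * t) / Real.sqrt (2 * t * (1 - t))
    = (1 - 2 * t) / Real.sqrt (2 * t * (1 - t)) * h from fun h => by ring]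
  rw [this]
  have e : π / (2 + ((1 - 2 * t) / Real.sqrt (2 * t * (1 - t))) ^ 2) = π * (2 * t * (1 - t)) := by
    rw [div_pow, hq, show 2 + (1 - 2 * t) ^ 2 / (2 * t * (1 - t)) = 1 / (2 * t * (1 - t)) by
      rw [eq_div_iff hp.ne', add_mul, div_mul_cancel₀ _ hp.ne']; ring]
    rw [div_div_eq_mul_div, div_one]
  rw [e, Real.sqrt_mul pi_pos.le]
  have : Real.sqrt π ≠ 0 := by positivity
  generalize Real.sqrt (2 * t * (1 - t)) = s at *
  field_simp
  ring
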